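/- Let Ω ⊊ ℝ^{n+1} be open, let x ∈ Ω and y ∈ cl(Ω) with δ_Ω(y) ≤ δ_Ω(x). Then: (i) for every λ ∈ (0,1) there exists C ≥ 1, depending only on λ and n, such that if there is a λ-carrot curve from x to y, then there is a C-good Harnack chain from x to y; and (ii) for every C ≥ 1 there exists λ ∈ (0,1), depending only on C and n, such that if there is a C-good Harnack chain from x to y, then there is a λ-carrot curve from x to y. -/

import Mathlib

open Metric MeasureTheory Set Filter Topology

noncomputable section

/-- Euclidean space `ℝ^d`. -/
abbrev Euc (d : ℕ) : Type := EuclideanSpace ℝ (Fin d)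

namespace HarmMeas

/-- Distance between two sets. -/
def setD {d : ℕ} (s t : Set (Euc d)) : ℝ := sInf (Set.image2 dist s t)

/-- A continuous function is subharmonic on `U` if it satisfies the sub-mean-value
property on every ball whose closure is contained in `U`. -/
def SubharmonicOn {d : ℕ} (u : Euc d → ℝ) (U : Set (Euc d)) : Prop :=
  ContinuousOn u U ∧ ∀ x ∈ U, ∀ r : ℝ, 0 < r → closedBall x r ⊆ U →
    u x ≤ ⨍ y in ball x r, u y

/-- Harmonic (continuous) functions: both `u` and `-u` are subharmonic. -/
def HarmonicOnS {d : ℕ} (u : Euc d → ℝ) (U : Set (Euc d)) : Prop :=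
  SubharmonicOn u U ∧ SubharmonicOn (fun y => -u y) U

/-- The upper (Perron) class associated to boundary data `f` on the open set `Ω`:
superharmonic functions on `Ω`, bounded below, whose liminf at each boundary point
dominates `f` there. -/
def upperFamily {d : ℕ} (Ω : Set (Euc d)) (f : Euc d → ℝ) : Set (Euc d → ℝ) :=
  {u | SubharmonicOn (fun y => -u y) Ω ∧ BddBelow (u '' Ω) ∧
       ∀ ξ ∈ frontier Ω, f ξ ≤ Filter.liminf u (nhdsWithin ξ Ω)}

/-- The (upper) Perron solution of the Dirichlet problem in `Ω` with boundary data `f`,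
evaluated at `p`. -/
def perron {d : ℕ} (Ω : Set (Euc d)) (f : Euc d → ℝ) (p : Euc d) : ℝ :=
  sInf ((fun u => u p) '' upperFamily Ω f)

/-- Harmonic measure `ω^p(A)` of `A` for the open set `Ω` with pole `p`: the value at `p`
of the Perron solution with boundary data the characteristic function of `A`. -/
def hMeasure {d : ℕ} (Ω : Set (Euc d)) (p : Euc d) (A : Set (Euc d)) : ℝ :=
  perron Ω (A.indicator fun _ => 1) p

/-- The Green function `g(p,x)` of `Ω ⊆ ℝ^{n+1}` with pole `p`: the fundamental solution
`|x-p|^{1-n}` minus the Perron solution with the fundamental solution as boundary data. -/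
def greenFn (n : ℕ) (Ω : Set (Euc (n+1))) (p x : Euc (n+1)) : ℝ :=
  ‖x - p‖ ^ ((1 : ℤ) - n) - perron Ω (fun ξ => ‖ξ - p‖ ^ ((1 : ℤ) - n)) x

/-- `F ⊆ ℝ^{n+1}` is `n`-AD-regular with constant `C₀`. -/
def ADRegular (n : ℕ) (C₀ : ℝ) (F : Set (Euc (n+1))) : Prop :=
  ∀ x ∈ F, ∀ r : ℝ, 0 < r → ENNReal.ofReal r ≤ EMetric.diam F →
    ENNReal.ofReal (C₀⁻¹ * r ^ n) ≤ μH[n] (F ∩ ball x r) ∧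
      μH[n] (F ∩ ball x r) ≤ ENNReal.ofReal (C₀ * r ^ n)

/-- A `λ`-carrot curve from `x` to `y` in `Ω`: a curve `γ ⊆ Ω ∪ {y}` with endpoints `x`
and `y` such that `dist(z, ∂Ω) ≥ λ ⋅ ℋ¹(γ(y,z))` for every point `z = γ(t)` of the curve,
where `γ(y,z)` is the arc of `γ` between `y` and `z`. -/
def CarrotCurve {d : ℕ} (Ω : Set (Euc d)) (lam : ℝ) (x y : Euc d) : Prop :=
  ∃ γ : ℝ → Euc d, ContinuousOn γ (Icc 0 1) ∧ γ 0 = x ∧ γ 1 = y ∧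
    γ '' Icc 0 1 ⊆ Ω ∪ {y} ∧
    ∀ t ∈ Icc (0:ℝ) 1,
      ENNReal.ofReal lam * μH[1] (γ '' Icc t 1) ≤
        ENNReal.ofReal (infDist (γ t) (frontier Ω))

/-- A `C`-good Harnack chain from `x ∈ Ω` to `y ∈ cl Ω`, all of whose balls are moreover
contained in the set `W`: consecutive balls meet, each ball has radius comparable (with
constant `C`) to its distance to `∂Ω`, radii are quasi-monotone, and for each `t > 0`
there are at most `C` balls of radius in `(t, 2t]`.  If `y ∈ Ω` the chain is finite and
`y` lies in its last ball; if `y ∈ ∂Ω` the chain is infinite and the balls converge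
to `y`. -/
def GoodChainIn {d : ℕ} (Ω W : Set (Euc d)) (C : ℝ) (x y : Euc d) : Prop :=
  (y ∈ Ω ∧ ∃ (N : ℕ) (c : ℕ → Euc d) (r : ℕ → ℝ),
    x ∈ ball (c 0) (r 0) ∧ y ∈ ball (c N) (r N) ∧
    (∀ j ≤ N, 0 < r j ∧ ball (c j) (r j) ⊆ Ω ∩ W) ∧
    (∀ j < N, (ball (c j) (r j) ∩ ball (c (j+1)) (r (j+1))).Nonempty) ∧
    (∀ j ≤ N, C⁻¹ * setD (ball (c j) (r j)) (frontier Ω) ≤ r j ∧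
      r j ≤ C * setD (ball (c j) (r j)) (frontier Ω)) ∧
    (∀ i j, i ≤ N → j ≤ N → i < j → r j ≤ C * r i) ∧
    (∀ t : ℝ, 0 < t →
      {j | j ≤ N ∧ t < r j ∧ r j ≤ 2 * t}.Finite ∧
      (Nat.card {j | j ≤ N ∧ t < r j ∧ r j ≤ 2 * t} : ℝ) ≤ C))
  ∨ (y ∈ frontier Ω ∧ ∃ (c : ℕ → Euc d) (r : ℕ → ℝ),
    x ∈ ball (c 0) (r 0) ∧
    Filter.Tendsto (fun j => infDist y (ball (c j) (r j))) atTop (nhds 0) ∧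
    (∀ j, 0 < r j ∧ ball (c j) (r j) ⊆ Ω ∩ W) ∧
    (∀ j, (ball (c j) (r j) ∩ ball (c (j+1)) (r (j+1))).Nonempty) ∧
    (∀ j, C⁻¹ * setD (ball (c j) (r j)) (frontier Ω) ≤ r j ∧
      r j ≤ C * setD (ball (c j) (r j)) (frontier Ω)) ∧
    (∀ i j : ℕ, i < j → r j ≤ C * r i) ∧
    (∀ t : ℝ, 0 < t →
      {j | t < r j ∧ r j ≤ 2 * t}.Finite ∧
      (Nat.card {j | t < r j ∧ r j ≤ 2 * t} : ℝ) ≤ C))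

/-- A `C`-good Harnack chain from `x` to `y`. -/
def GoodChain {d : ℕ} (Ω : Set (Euc d)) (C : ℝ) (x y : Euc d) : Prop :=
  GoodChainIn Ω Set.univ C x y

/-!
Write `δ` for the distance to `∂Ω`. From a carrot curve one selects points greedily: after `z` comes
the last point of the curve at distance `δ(z) / 4` from `z`. Later points never come back closer to
`z`, while the carrot condition keeps them within `δ(z) / λ` of it. A packing argument then bounds
the number of selected points with `δ` in a given dyadic range, so the selection either comes
within `δ / 4` of `y` or converges to the boundary, and the balls of radius `δ / 2` about the
selected points form the chain.

Conversely, the radii of a tail of the chain are bounded by a multiple of the first of them, and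
with boundedly many in each dyadic range their sum is dominated by a geometric series. The tails of
the polygonal path through the intersections of consecutive balls are therefore no longer than a
multiple of the distance to `∂Ω`.
-/

open scoped NNReal ENNReal

section Packing

lemma packingNumber_ne_top_of_totallyBounded {X : Type*} [PseudoEMetricSpace X] {A : Set X}
    (hA : TotallyBounded A) {ε : ℝ≥0} (hε : ε ≠ 0) : packingNumber ε A ≠ ⊤ := by
  have hε2 : ε / 2 ≠ 0 := by positivity
  obtain ⟨N, -, hN, hcover⟩ := exists_finite_isCover_of_totallyBounded hε2 hA
  have hle : packingNumber (2 * (ε / 2)) A ≤ N.encard :=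
    (packingNumber_two_mul_le_externalCoveringNumber _ _).trans
      hcover.externalCoveringNumber_le_encard
  rw [mul_div_cancel₀ ε two_ne_zero] at hle
  exact ne_top_of_le_ne_top hN.encard_lt_top.ne hle

lemma exists_encard_le_of_separated (E : Type*) [NormedAddCommGroup E] [NormedSpace ℝ E]
    [FiniteDimensional ℝ E] (R : ℝ) :
    ∃ M : ℕ, ∀ (A : Set E) (p : E) (ρ : ℝ), 0 < ρ → A ⊆ closedBall p (R * ρ) →
      A.Pairwise (fun a b => ρ ≤ dist a b) → A.encard ≤ M := by
  have : ProperSpace E := FiniteDimensional.proper ℝ E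
  have hfin : packingNumber (1 / 2) (closedBall (0 : E) R) ≠ ⊤ :=
    packingNumber_ne_top_of_totallyBounded (isCompact_closedBall _ _).totallyBounded (by simp)
  refine ⟨(packingNumber (1 / 2) (closedBall (0 : E) R)).toNat, fun A p ρ hρ hA hsep => ?_⟩
  set f : E → E := fun a => ρ⁻¹ • (a - p)
  have hdist (a b : E) : dist (f a) (f b) = ρ⁻¹ * dist a b := by
    rw [dist_smul₀, dist_sub_right, norm_inv, Real.norm_of_nonneg hρ.le]
  have hinj : Function.Injective f := fun a b hab => by
    simpa [hdist, hρ.ne'] using dist_eq_zero.2 hab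
  have himage : f '' A ⊆ closedBall 0 R := by
    rintro _ ⟨a, ha, rfl⟩
    have hp : f p = 0 := by simp [f]
    rw [mem_closedBall, ← hp, hdist, inv_mul_le_iff₀ hρ, mul_comm ρ]
    exact hA ha
  have hfsep : IsSeparated ((1 / 2 : ℝ≥0) : ℝ≥0∞) (f '' A) := by
    rintro _ ⟨a, ha, rfl⟩ _ ⟨b, hb, rfl⟩ hab
    have hone : 1 ≤ dist (f a) (f b) := by
      rw [hdist, le_inv_mul_iff₀ hρ, mul_one]
      exact hsep ha hb (ne_of_apply_ne f hab)
    rw [edist_nndist, ENNReal.coe_lt_coe, ← NNReal.coe_lt_coe, coe_nndist]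
    refine lt_of_lt_of_le ?_ hone
    norm_num
  rw [← hinj.encard_image, ENat.natCast_toNat hfin]
  exact hfsep.encard_le_packingNumber himage

lemma exists_ncard_le_of_dist_le_of_separated (E : Type*) [NormedAddCommGroup E] [NormedSpace ℝ E]
    [FiniteDimensional ℝ E] {lam : ℝ} (hlam : 0 < lam) (κ : ℝ) :
    ∃ M : ℕ, ∀ (S : Set ℕ) (z : ℕ → E) (D : ℕ → ℝ) (ε : ℝ), 0 < ε →
      (∀ j ∈ S, ε ≤ D j ∧ D j ≤ κ * ε) →
      (∀ i ∈ S, ∀ j ∈ S, i ≤ j → dist (z j) (z i) ≤ D i / lam) →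
      (∀ i ∈ S, ∀ j ∈ S, i < j → D i / 4 ≤ dist (z j) (z i)) → S.Finite ∧ S.ncard ≤ M := by
  obtain ⟨M, hM⟩ := exists_encard_le_of_separated E (4 * κ / lam)
  refine ⟨M, fun S z D ε hε hD hdist hsep => ?_⟩
  rcases S.eq_empty_or_nonempty with rfl | hS
  · simp
  have hsep' : ∀ i ∈ S, ∀ j ∈ S, i ≠ j → ε / 4 ≤ dist (z i) (z j) := by
    intro i hi j hj hij
    rcases lt_or_gt_of_ne hij with h | h
    · rw [dist_comm]
      linarith [hsep i hi j hj h, (hD i hi).1]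
    · linarith [hsep j hj i hi h, (hD j hj).1]
  have hinj : S.InjOn z := fun i hi j hj hij => by
    by_contra hne
    have := hsep' i hi j hj hne
    rw [hij, dist_self] at this
    linarith
  have hfirst : sInf S ∈ S := Nat.sInf_mem hS
  have hball : z '' S ⊆ closedBall (z (sInf S)) (4 * κ / lam * (ε / 4)) := by
    rintro _ ⟨j, hj, rfl⟩
    calc dist (z j) (z (sInf S)) ≤ D (sInf S) / lam := hdist _ hfirst j hj (Nat.sInf_le hj)
      _ ≤ κ * ε / lam := by gcongr; exact (hD _ hfirst).2
      _ = 4 * κ / lam * (ε / 4) := by ring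
  have hpair : (z '' S).Pairwise (fun a b => ε / 4 ≤ dist a b) := by
    rintro _ ⟨i, hi, rfl⟩ _ ⟨j, hj, rfl⟩ hij
    exact hsep' i hi j hj (ne_of_apply_ne z hij)
  rw [← encard_le_coe_iff_finite_ncard_le, ← hinj.encard_image]
  exact hM _ _ _ (by positivity) hball hpair

end Packing

section DyadicCount

variable {ι : Type*} {C : ℝ} {J : Set ι} {r : ι → ℝ}

/-- Each dyadic scale `(t, 2t]` contains at most `C` of the radii `r j` with `j ∈ J`. Finiteness is
part of the condition because `Nat.card` vanishes on infinite sets. -/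
def DyadicCountLE (C : ℝ) (J : Set ι) (r : ι → ℝ) : Prop :=
  ∀ t : ℝ, 0 < t → {j | j ∈ J ∧ t < r j ∧ r j ≤ 2 * t}.Finite ∧
    (Nat.card {j | j ∈ J ∧ t < r j ∧ r j ≤ 2 * t} : ℝ) ≤ C

lemma DyadicCountLE.nonneg (h : DyadicCountLE C J r) : 0 ≤ C :=
  (Nat.cast_nonneg _).trans (h 1 one_pos).2

lemma DyadicCountLE.mono {C' : ℝ} (h : DyadicCountLE C J r) (hC : C ≤ C') :
    DyadicCountLE C' J r :=
  fun t ht => ⟨(h t ht).1, (h t ht).2.trans hC⟩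

lemma DyadicCountLE.card_le (h : DyadicCountLE C J r) {t : ℝ} (ht : 0 < t) {s : Finset ι}
    (hs : ∀ j ∈ s, j ∈ J ∧ t < r j ∧ r j ≤ 2 * t) : (s.card : ℝ) ≤ C := by
  obtain ⟨hfin, hcard⟩ := h t ht
  rw [Nat.card_coe_set_eq] at hcard
  rw [← ncard_coe_finset]
  exact (Nat.cast_le.2 (ncard_le_ncard hs hfin)).trans hcard

lemma DyadicCountLE.sum_le_of_mem_scale (h : DyadicCountLE C J r) {t : ℝ} (ht : 0 < t)
    {s : Finset ι} (hs : ∀ j ∈ s, j ∈ J ∧ t < r j ∧ r j ≤ 2 * t) :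
    ∑ j ∈ s, r j ≤ C * (2 * t) :=
  calc ∑ j ∈ s, r j ≤ s.card • (2 * t) := Finset.sum_le_card_nsmul _ _ _ fun j hj => (hs j hj).2.2
    _ ≤ C * (2 * t) := by
        rw [nsmul_eq_mul]
        gcongr
        exact h.card_le ht hs

lemma DyadicCountLE.sum_le_of_le (h : DyadicCountLE C J r) (hpos : ∀ j ∈ J, 0 < r j)
    {R : ℝ} (hR : 0 < R) {s : Finset ι} (hsJ : ∀ j ∈ s, j ∈ J) (hsR : ∀ j ∈ s, r j ≤ R) :
    ∑ j ∈ s, r j ≤ 2 * C * R := by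
  classical
  have hscale : ∀ j, ∃ k : ℕ, j ∈ s → R * (1 / 2) ^ (k + 1) < r j ∧ r j ≤ R * (1 / 2) ^ k := by
    intro j
    by_cases hj : j ∈ s
    · obtain ⟨k, hlt, hle⟩ := exists_nat_pow_near_of_lt_one (x := r j / R) (y := (1 / 2 : ℝ))
        (div_pos (hpos j (hsJ j hj)) hR) ((div_le_one hR).2 (hsR j hj)) (by norm_num) (by norm_num)
      exact ⟨k, fun _ => ⟨(lt_div_iff₀' hR).1 hlt, (div_le_iff₀' hR).1 hle⟩⟩
    · exact ⟨0, fun hjs => absurd hjs hj⟩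
  choose k hk using hscale
  have hfiber : ∀ m ∈ s.image k, ∑ j ∈ s with k j = m, r j ≤ C * R * (1 / 2) ^ m := by
    intro m _
    refine (h.sum_le_of_mem_scale (t := R * (1 / 2) ^ (m + 1)) (by positivity)
      fun j hj => ?_).trans_eq (by ring)
    obtain ⟨hjs, rfl⟩ := Finset.mem_filter.1 hj
    exact ⟨hsJ j hjs, (hk j hjs).1, (hk j hjs).2.trans_eq (by ring)⟩
  calc ∑ j ∈ s, r j = ∑ m ∈ s.image k, ∑ j ∈ s with k j = m, r j :=
        (Finset.sum_fiberwise_of_maps_to (fun j hj => Finset.mem_image_of_mem k hj) r).symm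
    _ ≤ ∑ m ∈ s.image k, C * R * (1 / 2) ^ m := Finset.sum_le_sum hfiber
    _ = C * R * ∑ m ∈ s.image k, (1 / 2) ^ m := (Finset.mul_sum _ _ _).symm
    _ ≤ C * R * 2 := by
        have := h.nonneg
        gcongr
        exact (summable_geometric_two.sum_le_tsum _ fun _ _ => by positivity).trans_eq
          tsum_geometric_two
    _ = 2 * C * R := by ring

end DyadicCount

section BoundaryDistance

lemma ball_infDist_frontier_subset {E : Type*} [NormedAddCommGroup E] [NormedSpace ℝ E]
    [FiniteDimensional ℝ E] {s : Set E} {p : E} (hp : p ∈ s) :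
    ball p (infDist p (frontier s)) ⊆ s := by
  rcases eq_or_ne s univ with rfl | hs
  · exact subset_univ _
  obtain ⟨q, hq, hdist⟩ := exists_mem_frontier_infDist_compl_eq_dist hp hs
  have hle : infDist p (frontier s) ≤ infDist p sᶜ := hdist ▸ infDist_le_dist_of_mem hq
  exact (ball_subset_ball hle).trans ball_infDist_compl_subset

lemma infDist_frontier_pos {X : Type*} [PseudoMetricSpace X] {s : Set X} (hs : IsOpen s)
    (hF : (frontier s).Nonempty) {p : X} (hp : p ∈ s) : 0 < infDist p (frontier s) :=
  (isClosed_frontier.notMem_iff_infDist_pos hF).1 fun hpF =>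
    disjoint_left.1 (disjoint_frontier_iff_isOpen.2 hs) hpF hp

variable {d : ℕ} {F : Set (Euc d)} {p : Euc d}

lemma setD_le_infDist {B : Set (Euc d)} (hp : p ∈ B) (hF : F.Nonempty) :
    setD B F ≤ infDist p F := by
  rw [le_infDist hF]
  intro q hq
  exact csInf_le ⟨0, by rintro _ ⟨a, -, b, -, rfl⟩; exact dist_nonneg⟩ (mem_image2_of_mem hp hq)

lemma infDist_div_two_le_setD_ball (hF : F.Nonempty) (hp : 0 < infDist p F) :
    infDist p F / 2 ≤ setD (ball p (infDist p F / 2)) F := by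
  refine le_csInf (Nonempty.image2 ⟨p, mem_ball_self (by positivity)⟩ hF) ?_
  rintro _ ⟨a, ha, b, hb, rfl⟩
  have ha : dist a p < infDist p F / 2 := ha
  linarith [infDist_le_dist_of_mem (x := p) hb, dist_triangle_left p b a]

end BoundaryDistance

section ExitTimes

lemma exists_last_le {f : ℝ → ℝ} {a b ρ : ℝ} (hab : a ≤ b) (hf : ContinuousOn f (Icc a b))
    (ha : f a ≤ ρ) :
    ∃ c ∈ Icc a b, f c ≤ ρ ∧ (ρ ≤ f b → ∀ s ∈ Icc c b, ρ ≤ f s) := by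
  have hclosed : IsClosed (Icc a b ∩ f ⁻¹' Iic ρ) :=
    hf.preimage_isClosed_of_isClosed isClosed_Icc isClosed_Iic
  obtain ⟨c, ⟨hc, hcρ⟩, hlast⟩ :=
    (isCompact_Icc.of_isClosed_subset hclosed inter_subset_left).exists_isGreatest
      ⟨a, ⟨le_rfl, hab⟩, ha⟩
  refine ⟨c, hc, hcρ, fun hb s hs => ?_⟩
  obtain ⟨u, hu, rfl⟩ := intermediate_value_Icc hc.2 (hf.mono (Icc_subset_Icc_left hc.1)) ⟨hcρ, hb⟩
  have huc : u = c := le_antisymm (hlast ⟨⟨hc.1.trans hu.1, hu.2⟩, le_refl (f u)⟩) hu.1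
  by_contra! hlt
  have hsc : s = c := le_antisymm (hlast ⟨⟨hc.1.trans hs.1, hs.2⟩, hlt.le⟩) hs.1
  rw [hsc, huc] at hlt
  exact lt_irrefl _ hlt

lemma exists_exit_times {X : Type*} [PseudoMetricSpace X] {γ : ℝ → X}
    (hγ : ContinuousOn γ (Icc 0 1)) {ρ : X → ℝ} (hρ : ∀ p, 0 ≤ ρ p) :
    ∃ T : ℕ → Icc (0 : ℝ) 1, T 0 = 0 ∧ Monotone T ∧ ∀ i,
      dist (γ (T (i + 1))) (γ (T i)) ≤ ρ (γ (T i)) ∧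
      (ρ (γ (T i)) ≤ dist (γ 1) (γ (T i)) →
        ∀ s ∈ Icc (T (i + 1) : ℝ) 1, ρ (γ (T i)) ≤ dist (γ s) (γ (T i))) := by
  have hnext : ∀ t : Icc (0 : ℝ) 1, ∃ t' : Icc (0 : ℝ) 1, t ≤ t' ∧
      dist (γ t') (γ t) ≤ ρ (γ t) ∧
      (ρ (γ t) ≤ dist (γ 1) (γ t) → ∀ s ∈ Icc (t' : ℝ) 1, ρ (γ t) ≤ dist (γ s) (γ t)) := by
    intro t
    have hcont : ContinuousOn (fun s => dist (γ s) (γ t)) (Icc (t : ℝ) 1) :=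
      continuous_id.dist continuous_const |>.comp_continuousOn (hγ.mono (Icc_subset_Icc_left t.2.1))
    obtain ⟨c, hc, hclose, hfar⟩ := exists_last_le t.2.2 hcont (by simpa using hρ (γ t))
    exact ⟨⟨c, t.2.1.trans hc.1, hc.2⟩, hc.1, hclose, hfar⟩
  choose next hle hnext using hnext
  have hsucc (i : ℕ) : next^[i + 1] 0 = next (next^[i] 0) := Function.iterate_succ_apply' ..
  refine ⟨fun i => next^[i] 0, rfl, monotone_nat_of_le_succ fun i => ?_, fun i => ?_⟩
  · simpa only [hsucc] using hle (next^[i] 0)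
  · simpa only [hsucc] using hnext (next^[i] 0)

end ExitTimes

section HausdorffLength

lemma edist_le_hausdorffMeasure_of_isPreconnected {X : Type*} [MetricSpace X] [MeasurableSpace X]
    [BorelSpace X] {K : Set X} (hK : IsPreconnected K) {a b : X} (ha : a ∈ K) (hb : b ∈ K) :
    edist a b ≤ μH[1] K := by
  have hIcc : Icc 0 (dist a b) ⊆ dist a '' K :=
    (hK.image _ (by fun_prop)).Icc_subset ⟨a, ha, dist_self a⟩ ⟨b, hb, rfl⟩
  calc edist a b = volume (Icc 0 (dist a b)) := by rw [Real.volume_Icc, sub_zero, edist_dist]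
    _ ≤ volume (dist a '' K) := measure_mono hIcc
    _ = μH[1] (dist a '' K) := by rw [hausdorffMeasure_real]
    _ ≤ μH[1] K := by
      simpa using (LipschitzWith.dist_right a).hausdorffMeasure_image_le zero_le_one K

lemma dist_le_div_of_hausdorffMeasure_image_le {X : Type*} [MetricSpace X] [MeasurableSpace X]
    [BorelSpace X] {γ : ℝ → X} {a b s lam ρ : ℝ} (hlam : 0 < lam)
    (hγ : ContinuousOn γ (Icc a b)) (hρ : 0 ≤ ρ)
    (h : ENNReal.ofReal lam * μH[1] (γ '' Icc a b) ≤ ENNReal.ofReal ρ) (hs : s ∈ Icc a b) :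
    dist (γ s) (γ a) ≤ ρ / lam := by
  have hdist : edist (γ s) (γ a) ≤ μH[1] (γ '' Icc a b) :=
    edist_le_hausdorffMeasure_of_isPreconnected (isPreconnected_Icc.image γ hγ)
      (mem_image_of_mem γ hs) (mem_image_of_mem γ (left_mem_Icc.2 (hs.1.trans hs.2)))
  rw [le_div_iff₀' hlam, ← ENNReal.ofReal_le_ofReal_iff hρ, ENNReal.ofReal_mul hlam.le,
    ← edist_dist]
  exact (mul_le_mul_right hdist _).trans h

end HausdorffLength

section GoodChainOn

variable {d : ℕ} {Ω : Set (Euc d)} {C : ℝ} {x y : Euc d}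

/-- The conditions on a `C`-good Harnack chain that do not mention its endpoints, for the balls
`ball (c j) (r j)` with `j ∈ J`. Finite chains have `J = Iic N` and infinite ones `J = univ`. -/
structure IsGoodChainOn (Ω : Set (Euc d)) (C : ℝ) (J : Set ℕ) (c : ℕ → Euc d) (r : ℕ → ℝ) :
    Prop where
  radius_pos : ∀ j ∈ J, 0 < r j
  ball_subset : ∀ j ∈ J, ball (c j) (r j) ⊆ Ω
  inter_nonempty : ∀ j, j + 1 ∈ J → (ball (c j) (r j) ∩ ball (c (j + 1)) (r (j + 1))).Nonempty
  setD_le : ∀ j ∈ J, C⁻¹ * setD (ball (c j) (r j)) (frontier Ω) ≤ r j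
  le_setD : ∀ j ∈ J, r j ≤ C * setD (ball (c j) (r j)) (frontier Ω)
  radius_le : ∀ i ∈ J, ∀ j ∈ J, i < j → r j ≤ C * r i
  dyadicCountLE : DyadicCountLE C J r

lemma goodChain_iff : GoodChain Ω C x y ↔
    (y ∈ Ω ∧ ∃ N c r, IsGoodChainOn Ω C (Iic N) c r ∧ x ∈ ball (c 0) (r 0) ∧
      y ∈ ball (c N) (r N)) ∨
    (y ∈ frontier Ω ∧ ∃ c r, IsGoodChainOn Ω C univ c r ∧ x ∈ ball (c 0) (r 0) ∧
      Tendsto (fun j => infDist y (ball (c j) (r j))) atTop (𝓝 0)) := by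
  refine or_congr (and_congr_right fun _ => exists_congr fun N => exists_congr fun c =>
    exists_congr fun r => ?_) (and_congr_right fun _ => exists_congr fun c =>
      exists_congr fun r => ?_)
  · constructor
    · rintro ⟨hx, hy, hball, hinter, hcomp, hmono, hcount⟩
      exact ⟨⟨fun j hj => (hball j hj).1, fun j hj => (hball j hj).2.trans inter_subset_left,
        hinter, fun j hj => (hcomp j hj).1, fun j hj => (hcomp j hj).2,
        fun i hi j hj => hmono i j hi hj, hcount⟩, hx, hy⟩
    · rintro ⟨h, hx, hy⟩
      exact ⟨hx, hy, fun j hj => ⟨h.radius_pos j hj, subset_inter (h.ball_subset j hj)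
        (subset_univ _)⟩, h.inter_nonempty, fun j hj => ⟨h.setD_le j hj, h.le_setD j hj⟩,
        fun i j hi hj => h.radius_le i hi j hj, h.dyadicCountLE⟩
  · have huniv : DyadicCountLE C univ r ↔ ∀ t : ℝ, 0 < t → {j | t < r j ∧ r j ≤ 2 * t}.Finite ∧
        (Nat.card {j | t < r j ∧ r j ≤ 2 * t} : ℝ) ≤ C := by
      simp only [DyadicCountLE, mem_univ, true_and]
    constructor
    · rintro ⟨hx, hy, hball, hinter, hcomp, hmono, hcount⟩
      exact ⟨⟨fun j _ => (hball j).1, fun j _ => (hball j).2.trans inter_subset_left,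
        fun j _ => hinter j, fun j _ => (hcomp j).1, fun j _ => (hcomp j).2,
        fun i _ j _ => hmono i j, huniv.2 hcount⟩, hx, hy⟩
    · rintro ⟨h, hx, hy⟩
      exact ⟨hx, hy, fun j => ⟨h.radius_pos j trivial, subset_inter (h.ball_subset j trivial)
        (subset_univ _)⟩, fun j => h.inter_nonempty j trivial,
        fun j => ⟨h.setD_le j trivial, h.le_setD j trivial⟩,
        fun i j => h.radius_le i trivial j trivial, huniv.1 h.dyadicCountLE⟩

end GoodChainOn

local notation "δ[" Ω "]" p:max => infDist p (frontier Ω)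

section CarrotSequence

variable {d : ℕ} {Ω : Set (Euc d)} {lam : ℝ} {x y : Euc d} {z : ℕ → Euc d}

/-- A discrete `λ`-carrot in `Ω` with tip `y`. Successive points are within a quarter of the
distance to the boundary, and by `le_dist` the sequence does not come back closer than that to a
point it has left, unless `y` is that close. -/
structure IsCarrotSeq (Ω : Set (Euc d)) (lam : ℝ) (z : ℕ → Euc d) (y : Euc d) : Prop where
  mem : ∀ i, z i ∈ Ω
  dist_le : ∀ i j, i ≤ j → dist (z j) (z i) ≤ δ[Ω](z i) / lam
  dist_end_le : ∀ i, dist y (z i) ≤ δ[Ω](z i) / lam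
  dist_succ_le : ∀ i, dist (z (i + 1)) (z i) ≤ δ[Ω](z i) / 4
  le_dist : ∀ i j, i < j → δ[Ω](z i) / 4 ≤ dist y (z i) → δ[Ω](z i) / 4 ≤ dist (z j) (z i)

lemma CarrotCurve.exists_isCarrotSeq (h : CarrotCurve Ω lam x y) (hlam : 0 < lam)
    (hΩ : IsOpen Ω) (hF : (frontier Ω).Nonempty) (hx : x ∈ Ω) (hy : y ∈ closure Ω) :
    ∃ z, z 0 = x ∧ IsCarrotSeq Ω lam z y := by
  obtain ⟨γ, hγ, rfl, rfl, hsub, hcarrot⟩ := h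
  obtain ⟨T, hT0, hT, hexit⟩ :=
    exists_exit_times hγ (ρ := fun p => δ[Ω](p) / 4) fun p => div_nonneg infDist_nonneg zero_le_four
  have harc : ∀ i, ∀ s ∈ Icc (T i : ℝ) 1, dist (γ s) (γ (T i)) ≤ δ[Ω](γ (T i)) / lam :=
    fun i s hs => dist_le_div_of_hausdorffMeasure_image_le hlam
      (hγ.mono (Icc_subset_Icc_left (T i).2.1)) infDist_nonneg (hcarrot _ (T i).2) hs
  have hpos (i : ℕ) : 0 < δ[Ω](γ (T i)) := by
    induction i with
    | zero => rw [hT0]; exact infDist_frontier_pos hΩ hF hx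
    | succ i ih =>
      have hle : δ[Ω](γ (T i)) ≤ δ[Ω](γ (T (i + 1))) + dist (γ (T i)) (γ (T (i + 1))) :=
        infDist_le_infDist_add_dist
      rw [dist_comm] at hle
      linarith [(hexit i).1]
  have hmem (i : ℕ) : γ (T i) ∈ Ω := by
    rcases hsub (mem_image_of_mem γ (T i).2) with hi | hi
    · exact hi
    · have hi : γ (T i) = γ 1 := hi
      by_contra hout
      have hfrontier : γ (T i) ∈ frontier Ω := hΩ.frontier_eq ▸ ⟨hi ▸ hy, hout⟩
      exact (hpos i).ne' (infDist_zero_of_mem hfrontier)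
  exact ⟨fun i => γ (T i), by simp [hT0], hmem,
    fun i j hij => harc i _ ⟨hT hij, (T j).2.2⟩,
    fun i => harc i 1 ⟨(T i).2.2, le_rfl⟩, fun i => (hexit i).1,
    fun i j hij hend => (hexit i).2 hend _ ⟨hT (Nat.succ_le_of_lt hij), (T j).2.2⟩⟩

namespace IsCarrotSeq

lemma infDist_frontier_le (h : IsCarrotSeq Ω lam z y) {i j : ℕ} (hij : i ≤ j) :
    δ[Ω](z j) ≤ (1 + 1 / lam) * δ[Ω](z i) := by
  have hle : δ[Ω](z j) ≤ δ[Ω](z i) + dist (z j) (z i) := infDist_le_infDist_add_dist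
  calc δ[Ω](z j) ≤ δ[Ω](z i) + δ[Ω](z i) / lam := by linarith [h.dist_le i j hij]
    _ = (1 + 1 / lam) * δ[Ω](z i) := by ring

lemma infDist_frontier_end_le (h : IsCarrotSeq Ω lam z y) (i : ℕ) :
    δ[Ω](y) ≤ (1 + 1 / lam) * δ[Ω](z i) := by
  have hle : δ[Ω](y) ≤ δ[Ω](z i) + dist y (z i) := infDist_le_infDist_add_dist
  calc δ[Ω](y) ≤ δ[Ω](z i) + δ[Ω](z i) / lam := by linarith [h.dist_end_le i]
    _ = (1 + 1 / lam) * δ[Ω](z i) := by ring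

lemma finite_setOf_le (h : IsCarrotSeq Ω lam z y) (hlam : 0 < lam)
    (hsep : ∀ i j, i < j → δ[Ω](z i) / 4 ≤ dist (z j) (z i)) {ε : ℝ} (hε : 0 < ε) :
    {j | ε ≤ δ[Ω](z j)}.Finite := by
  obtain ⟨M, hM⟩ := exists_ncard_le_of_dist_le_of_separated (Euc d) hlam
    ((1 + 1 / lam) * δ[Ω](z 0) / ε)
  refine (hM _ z (fun j => δ[Ω](z j)) ε hε (fun j hj => ⟨hj, ?_⟩)
    (fun i _ j _ => h.dist_le i j) fun i _ j _ => hsep i j).1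
  rw [div_mul_cancel₀ _ hε.ne']
  exact h.infDist_frontier_le j.zero_le

lemma tendsto_infDist_frontier (h : IsCarrotSeq Ω lam z y) (hlam : 0 < lam)
    (hsep : ∀ i j, i < j → δ[Ω](z i) / 4 ≤ dist (z j) (z i)) :
    Tendsto (fun j => δ[Ω](z j)) atTop (𝓝 0) := by
  refine Metric.tendsto_atTop.2 fun ε hε => ?_
  obtain ⟨b, hb⟩ := (h.finite_setOf_le hlam hsep hε).bddAbove
  refine ⟨b + 1, fun j hj => ?_⟩
  rw [Real.dist_0_eq_abs, abs_of_nonneg infDist_nonneg]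
  by_contra! hle
  have := hb hle
  lia

lemma exists_dist_end_lt (h : IsCarrotSeq Ω lam z y) (hlam : 0 < lam) (hy : 0 < δ[Ω](y)) :
    ∃ N, dist y (z N) < δ[Ω](z N) / 4 := by
  by_contra! hfar
  have hbound (i : ℕ) : δ[Ω](y) / (1 + 1 / lam) ≤ δ[Ω](z i) :=
    (div_le_iff₀' (by positivity)).2 (h.infDist_frontier_end_le i)
  exact infinite_univ ((h.finite_setOf_le hlam (fun i j hij => h.le_dist i j hij (hfar i))
    (ε := δ[Ω](y) / (1 + 1 / lam)) (by positivity)).subset fun i _ => hbound i)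

end IsCarrotSeq

lemma exists_dyadicCountLE_of_isCarrotSeq (d : ℕ) {lam : ℝ} (hlam : 0 < lam) :
    ∃ M : ℕ, ∀ {Ω : Set (Euc d)} {y : Euc d} {z : ℕ → Euc d} {J : Set ℕ},
      IsCarrotSeq Ω lam z y → (∀ i ∈ J, ∀ j ∈ J, i < j → δ[Ω](z i) / 4 ≤ dist (z j) (z i)) →
      DyadicCountLE M J (fun j => δ[Ω](z j) / 2) := by
  obtain ⟨M, hM⟩ := exists_ncard_le_of_dist_le_of_separated (Euc d) hlam 2
  refine ⟨M, fun {Ω y z J} hz hsep t ht => ?_⟩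
  obtain ⟨hfin, hcard⟩ := hM {j | j ∈ J ∧ t < δ[Ω](z j) / 2 ∧ δ[Ω](z j) / 2 ≤ 2 * t} z
    (fun j => δ[Ω](z j)) (2 * t) (by positivity)
    (fun j hj => ⟨by linarith [hj.2.1], by linarith [hj.2.2]⟩) (fun i _ j _ => hz.dist_le i j)
    fun i hi j hj => hsep i hi.1 j hj.1
  exact ⟨hfin, by rw [Nat.card_coe_set_eq]; exact mod_cast hcard⟩

lemma exists_isGoodChainOn_of_isCarrotSeq (d : ℕ) {lam : ℝ} (hlam : 0 < lam) :
    ∃ C : ℝ, 1 ≤ C ∧ ∀ {Ω : Set (Euc d)} {y : Euc d} {z : ℕ → Euc d} {J : Set ℕ}, IsOpen Ω →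
      (frontier Ω).Nonempty → IsCarrotSeq Ω lam z y →
      (∀ i ∈ J, ∀ j ∈ J, i < j → δ[Ω](z i) / 4 ≤ dist (z j) (z i)) →
      IsGoodChainOn Ω C J z (fun j => δ[Ω](z j) / 2) := by
  obtain ⟨M, hM⟩ := exists_dyadicCountLE_of_isCarrotSeq d hlam
  have hM0 : (0 : ℝ) ≤ M := M.cast_nonneg
  have hinv : 0 < 1 / lam := by positivity
  refine ⟨M + 2 + 1 / lam, by linarith only [hM0, hinv], fun {Ω y z J} hΩ hF hz hsep => ?_⟩
  set C : ℝ := M + 2 + 1 / lam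
  have hC : 2 ≤ C := by linarith only [hM0, hinv]
  have hpos (j : ℕ) : 0 < δ[Ω](z j) := infDist_frontier_pos hΩ hF (hz.mem j)
  constructor
  case radius_pos => exact fun j _ => half_pos (hpos j)
  case ball_subset =>
    exact fun j _ => (ball_subset_ball (half_le_self infDist_nonneg)).trans
      (ball_infDist_frontier_subset (hz.mem j))
  case inter_nonempty =>
    refine fun j _ => ⟨z (j + 1), ?_, mem_ball_self (half_pos (hpos (j + 1)))⟩
    rw [mem_ball]
    linarith [hz.dist_succ_le j, hpos j]
  case setD_le =>
    intro j _
    rw [inv_mul_le_iff₀ (two_pos.trans_le hC)]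
    have hle := setD_le_infDist (mem_ball_self (x := z j) (half_pos (hpos j))) hF
    nlinarith only [hle, hC, hpos j]
  case le_setD =>
    intro j _
    have hle := infDist_div_two_le_setD_ball hF (hpos j)
    nlinarith only [hle, hC, hpos j]
  case radius_le =>
    intro i _ j _ hij
    calc δ[Ω](z j) / 2 ≤ (1 + 1 / lam) * (δ[Ω](z i) / 2) := by
          linarith [hz.infDist_frontier_le hij.le]
      _ ≤ C * (δ[Ω](z i) / 2) := mul_le_mul_of_nonneg_right (by linarith) (half_pos (hpos i)).le
  case dyadicCountLE => exact (hM hz hsep).mono (by linarith)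

lemma CarrotCurve.exists_goodChain (d : ℕ) {lam : ℝ} (hlam : 0 < lam) :
    ∃ C : ℝ, 1 ≤ C ∧ ∀ {Ω : Set (Euc d)} {x y : Euc d}, IsOpen Ω → (frontier Ω).Nonempty →
      x ∈ Ω → y ∈ closure Ω → CarrotCurve Ω lam x y → GoodChain Ω C x y := by
  obtain ⟨C, hC, hchain⟩ := exists_isGoodChainOn_of_isCarrotSeq d hlam
  refine ⟨C, hC, fun {Ω x y} hΩ hF hx hy hcurve => goodChain_iff.2 ?_⟩
  obtain ⟨z, rfl, hz⟩ := hcurve.exists_isCarrotSeq hlam hΩ hF hx hy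
  have hpos (j : ℕ) : 0 < δ[Ω](z j) := infDist_frontier_pos hΩ hF (hz.mem j)
  have hz0 : z 0 ∈ ball (z 0) (δ[Ω](z 0) / 2) := mem_ball_self (half_pos (hpos 0))
  by_cases hyΩ : y ∈ Ω
  · classical
    have hend := hz.exists_dist_end_lt hlam (infDist_frontier_pos hΩ hF hyΩ)
    have hsep : ∀ i ∈ Iic (Nat.find hend), ∀ j ∈ Iic (Nat.find hend), i < j →
        δ[Ω](z i) / 4 ≤ dist (z j) (z i) := fun i _ j hj hij =>
      hz.le_dist i j hij (not_lt.1 (Nat.find_min hend (hij.trans_le hj)))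
    have hyN : y ∈ ball (z (Nat.find hend)) (δ[Ω](z (Nat.find hend)) / 2) := by
      rw [mem_ball]
      linarith [Nat.find_spec hend, hpos (Nat.find hend)]
    exact .inl ⟨hyΩ, Nat.find hend, z, _, hchain hΩ hF hz hsep, hz0, hyN⟩
  · have hyF : y ∈ frontier Ω := hΩ.frontier_eq ▸ ⟨hy, hyΩ⟩
    have hsep (i j : ℕ) (hij : i < j) : δ[Ω](z i) / 4 ≤ dist (z j) (z i) := by
      refine hz.le_dist i j hij ?_
      rw [dist_comm]
      linarith [hpos i, infDist_le_dist_of_mem (x := z i) hyF]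
    have hlim : Tendsto (fun j => δ[Ω](z j) / lam) atTop (𝓝 0) := by
      simpa using (hz.tendsto_infDist_frontier hlam hsep).div_const lam
    refine .inr ⟨hyF, z, _, hchain hΩ hF hz fun i _ j _ => hsep i j, hz0,
      squeeze_zero (fun _ => infDist_nonneg) (fun j => ?_) hlim⟩
    exact (infDist_le_dist_of_mem (mem_ball_self (half_pos (hpos j)))).trans (hz.dist_end_le j)

end CarrotSequence

section PolygonalPath

variable {E : Type*} [NormedAddCommGroup E] [NormedSpace ℝ E] {v : ℕ → E} {y : E} {t : ℝ} {j : ℕ}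

/-- The piecewise linear function equal to `0` up to time `1 - 2⁻ⁱ` and to `1` from time
`1 - 2⁻ⁱ⁻¹` on, during which a polygonal path runs along its `i`-th edge. -/
def dyadicRamp (i : ℕ) (t : ℝ) : ℝ := max 0 (min 1 (2 - 2 ^ (i + 1) * (1 - t)))

lemma dyadicRamp_mem_Icc (i : ℕ) (t : ℝ) : dyadicRamp i t ∈ Icc (0 : ℝ) 1 :=
  ⟨le_max_left _ _, max_le zero_le_one (min_le_left _ _)⟩

lemma continuous_dyadicRamp (i : ℕ) : Continuous (dyadicRamp i) := by
  unfold dyadicRamp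
  fun_prop

lemma dyadicRamp_eq_one {i : ℕ} (ht : 1 - t ≤ (1 / 2) ^ (i + 1)) : dyadicRamp i t = 1 := by
  have hle : 2 ^ (i + 1) * (1 - t) ≤ 1 := by
    rwa [one_div, inv_pow, ← one_div, le_div_iff₀' (by positivity)] at ht
  rw [dyadicRamp, min_eq_left (by linarith), max_eq_right zero_le_one]

lemma dyadicRamp_eq_zero {i : ℕ} (ht : (1 / 2) ^ i ≤ 1 - t) : dyadicRamp i t = 0 := by
  have hle : 1 ≤ 2 ^ i * (1 - t) := by
    rwa [one_div, inv_pow, ← one_div, div_le_iff₀' (by positivity)] at ht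
  exact max_eq_left ((min_le_right _ _).trans (by rw [pow_succ]; linarith))

/-- The infinite polygonal path with vertices `v 0, v 1, …`, parametrised so that it reaches `v i`
at time `1 - 2⁻ⁱ` and its limit at time `1`. -/
def polygonalPath (v : ℕ → E) (t : ℝ) : E := v 0 + ∑' i, dyadicRamp i t • (v (i + 1) - v i)

lemma polygonalPath_eq_lineMap (hge : (1 / 2) ^ (j + 1) ≤ 1 - t) (hle : 1 - t ≤ (1 / 2) ^ j) :
    polygonalPath v t = AffineMap.lineMap (v j) (v (j + 1)) (dyadicRamp j t) := by
  have hpow {m n : ℕ} (hmn : m ≤ n) : (1 / 2 : ℝ) ^ n ≤ (1 / 2) ^ m :=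
    pow_le_pow_of_le_one (by norm_num) (by norm_num) hmn
  have hpast : ∀ i ∈ Finset.range j, dyadicRamp i t • (v (i + 1) - v i) = v (i + 1) - v i :=
    fun i hi => by
      rw [dyadicRamp_eq_one (hle.trans (hpow (Finset.mem_range.1 hi))), one_smul]
  have hfuture : ∀ i ∉ Finset.range (j + 1), dyadicRamp i t • (v (i + 1) - v i) = 0 :=
    fun i hi => by
      rw [dyadicRamp_eq_zero ((hpow (by simpa using hi)).trans hge), zero_smul]
  rw [polygonalPath, tsum_eq_sum hfuture, Finset.sum_range_succ, Finset.sum_congr rfl hpast,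
    Finset.sum_range_sub, AffineMap.lineMap_apply_module']
  abel

lemma polygonalPath_zero : polygonalPath v 0 = v 0 := by
  rw [polygonalPath_eq_lineMap (j := 0) (by norm_num) (by norm_num),
    dyadicRamp_eq_zero (by norm_num), AffineMap.lineMap_apply_zero]

lemma polygonalPath_one (hv : Tendsto v atTop (𝓝 y)) (hsum : Summable fun i => ‖v (i + 1) - v i‖) :
    polygonalPath v 1 = y := by
  have hlim : HasSum (fun i => v (i + 1) - v i) (y - v 0) := by
    rw [hasSum_iff_tendsto_nat_of_summable_norm hsum]
    simpa only [Finset.sum_range_sub] using hv.sub_const (v 0)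
  have hramp (i : ℕ) : dyadicRamp i 1 = 1 := dyadicRamp_eq_one (by simp)
  simp only [polygonalPath, hramp, one_smul, hlim.tsum_eq, add_sub_cancel]

lemma continuous_polygonalPath [CompleteSpace E] (hsum : Summable fun i => ‖v (i + 1) - v i‖) :
    Continuous (polygonalPath v) := by
  refine continuous_const.add (continuous_tsum
    (fun i => (continuous_dyadicRamp i).smul continuous_const) hsum fun i t => ?_)
  rw [norm_smul, Real.norm_of_nonneg (dyadicRamp_mem_Icc i t).1]
  exact mul_le_of_le_one_left (norm_nonneg _) (dyadicRamp_mem_Icc i t).2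

lemma exists_polygonalPath_mem_segment (ht : t ∈ Ico (0 : ℝ) 1) :
    ∃ j, polygonalPath v t ∈ segment ℝ (v j) (v (j + 1)) ∧
      ∀ s ∈ Ico t 1, ∃ k, polygonalPath v s ∈ segment ℝ (v (j + k)) (v (j + k + 1)) := by
  have hstage : ∀ s ∈ Ico (0 : ℝ) 1, ∃ j : ℕ, (1 / 2) ^ (j + 1) < 1 - s ∧ 1 - s ≤ (1 / 2) ^ j :=
    fun s hs => exists_nat_pow_near_of_lt_one (sub_pos.2 hs.2) (sub_le_self _ hs.1) (by norm_num)
      (by norm_num)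
  have hmem {s : ℝ} {j : ℕ} (h : (1 / 2) ^ (j + 1) < 1 - s ∧ 1 - s ≤ (1 / 2) ^ j) :
      polygonalPath v s ∈ segment ℝ (v j) (v (j + 1)) := by
    rw [polygonalPath_eq_lineMap h.1.le h.2, segment_eq_image_lineMap]
    exact mem_image_of_mem _ (dyadicRamp_mem_Icc j s)
  obtain ⟨j, hj⟩ := hstage t ht
  refine ⟨j, hmem hj, fun s hs => ?_⟩
  obtain ⟨m, hm⟩ := hstage s ⟨ht.1.trans hs.1, hs.2⟩
  have hjm : j < m + 1 := by
    rw [← pow_lt_pow_iff_right_of_lt_one₀ (a := (1 / 2 : ℝ)) (by norm_num) (by norm_num)]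
    linarith [hm.1, hj.2, hs.1]
  obtain ⟨k, rfl⟩ := Nat.exists_eq_add_of_le (Nat.lt_succ_iff.1 hjm)
  exact ⟨k, hmem hm⟩

lemma hausdorffMeasure_le_of_subset_segments [MeasurableSpace E] [BorelSpace E] {A : Set E}
    (hA : A ⊆ {y} ∪ ⋃ k, segment ℝ (v k) (v (k + 1))) :
    μH[1] A ≤ ∑' k, edist (v k) (v (k + 1)) := by
  have := Measure.nullSingletonClass_hausdorff E one_pos
  calc μH[1] A ≤ μH[1] ({y} ∪ ⋃ k, segment ℝ (v k) (v (k + 1))) := measure_mono hA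
    _ ≤ μH[1] {y} + μH[1] (⋃ k, segment ℝ (v k) (v (k + 1))) := measure_union_le _ _
    _ ≤ ∑' k, μH[1] (segment ℝ (v k) (v (k + 1))) := by
        rw [measure_singleton, zero_add]
        exact measure_iUnion_le _
    _ = ∑' k, edist (v k) (v (k + 1)) := by simp only [hausdorffMeasure_segment]

lemma exists_mem_segment_and_hausdorffMeasure_polygonalPath_le [MeasurableSpace E] [BorelSpace E]
    (hv : Tendsto v atTop (𝓝 y)) (hsum : Summable fun i => ‖v (i + 1) - v i‖)
    (ht : t ∈ Ico (0 : ℝ) 1) :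
    ∃ j, polygonalPath v t ∈ segment ℝ (v j) (v (j + 1)) ∧
      μH[1] (polygonalPath v '' Icc t 1) ≤ ∑' k, edist (v (j + k)) (v (j + k + 1)) := by
  obtain ⟨j, hj, htail⟩ := exists_polygonalPath_mem_segment (v := v) ht
  refine ⟨j, hj, hausdorffMeasure_le_of_subset_segments (v := fun k => v (j + k)) (y := y) ?_⟩
  rintro _ ⟨s, hs, rfl⟩
  rcases hs.2.eq_or_lt with rfl | hs1
  · exact .inl (polygonalPath_one hv hsum)
  · exact .inr (mem_iUnion.2 (htail s ⟨hs.1, hs1⟩))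

end PolygonalPath

section ChainToCarrot

variable {d : ℕ} {Ω : Set (Euc d)} {C : ℝ} {x y : Euc d} {v c : ℕ → Euc d} {r : ℕ → ℝ} {J : Set ℕ}

lemma carrotCurve_of_polygonalPath {lam : ℝ} (hlam : 0 < lam) (hv : Tendsto v atTop (𝓝 y))
    (hsub : ∀ i, segment ℝ (v i) (v (i + 1)) ⊆ Ω ∪ {y})
    (hcarrot : ∀ i, ∀ z ∈ segment ℝ (v i) (v (i + 1)),
      ENNReal.ofReal lam * ∑' k, edist (v (i + k)) (v (i + k + 1)) ≤ ENNReal.ofReal (δ[Ω](z))) :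
    CarrotCurve Ω lam (v 0) y := by
  have hfin : ∑' k, edist (v k) (v (k + 1)) ≠ ⊤ := by
    have hle := hcarrot 0 (v 0) (left_mem_segment ℝ _ _)
    simp only [zero_add] at hle
    exact (ENNReal.lt_top_of_mul_ne_top_right (ne_top_of_le_ne_top ENNReal.ofReal_ne_top hle)
      (ENNReal.ofReal_pos.2 hlam).ne').ne
  have hsum : Summable fun k => ‖v (k + 1) - v k‖ := by
    simpa only [← dist_edist, dist_eq_norm'] using ENNReal.summable_toReal hfin
  have hone := polygonalPath_one hv hsum
  refine ⟨polygonalPath v, (continuous_polygonalPath hsum).continuousOn, polygonalPath_zero, hone,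
    ?_, fun t ht => ?_⟩
  · rintro _ ⟨t, ht, rfl⟩
    rcases ht.2.eq_or_lt with rfl | ht1
    · exact .inr hone
    · obtain ⟨j, hj, -⟩ := exists_polygonalPath_mem_segment (v := v) ⟨ht.1, ht1⟩
      exact hsub j hj
  · rcases ht.2.eq_or_lt with rfl | ht1
    · have := Measure.nullSingletonClass_hausdorff (Euc d) one_pos
      simp
    · obtain ⟨j, hj, hlength⟩ :=
        exists_mem_segment_and_hausdorffMeasure_polygonalPath_le hv hsum ⟨ht.1, ht1⟩
      exact (mul_le_mul_right hlength _).trans (hcarrot j _ hj)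

namespace IsGoodChainOn

lemma sum_radius_le (h : IsGoodChainOn Ω C J c r) (hC : 1 ≤ C) {i : ℕ} (hi : i ∈ J)
    {s : Finset ℕ} (hs : ∀ j ∈ s, j ∈ J ∧ i ≤ j) : ∑ j ∈ s, r j ≤ 2 * C ^ 2 * r i := by
  have hri := h.radius_pos i hi
  have hle : ∀ j ∈ s, r j ≤ C * r i := fun j hj => by
    rcases (hs j hj).2.eq_or_lt with rfl | hij
    · exact le_mul_of_one_le_left hri.le hC
    · exact h.radius_le i hi j (hs j hj).1 hij
  exact (h.dyadicCountLE.sum_le_of_le h.radius_pos (by positivity) (fun j hj => (hs j hj).1)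
    hle).trans_eq (by ring)

lemma exists_vertices (h : IsGoodChainOn Ω C J c r) (h0 : 0 ∈ J) (hx : x ∈ ball (c 0) (r 0))
    (hy : ∀ j ∈ J, j + 1 ∉ J → y ∈ ball (c j) (r j)) :
    ∃ v : ℕ → Euc d, v 0 = x ∧ (∀ j ∈ J, v j ∈ ball (c j) (r j) ∧ v (j + 1) ∈ ball (c j) (r j)) ∧
      ∀ j ∉ J, v j = y := by
  have hvertex : ∀ j, ∃ p, (j + 1 ∈ J → p ∈ ball (c j) (r j) ∩ ball (c (j + 1)) (r (j + 1))) ∧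
      (j + 1 ∉ J → p = y) := by
    intro j
    by_cases hj : j + 1 ∈ J
    · obtain ⟨p, hp⟩ := h.inter_nonempty j hj
      exact ⟨p, fun _ => hp, fun hj' => absurd hj hj'⟩
    · exact ⟨y, fun hj' => absurd hj' hj, fun _ => rfl⟩
  choose w hwmem hwy using hvertex
  refine ⟨fun j => Nat.casesOn j x w, rfl, fun j hj => ⟨?_, ?_⟩, fun j hj => ?_⟩
  · cases j with
    | zero => exact hx
    | succ j => exact (hwmem j hj).2
  · by_cases hj' : j + 1 ∈ J
    · exact (hwmem j hj').1
    · exact mem_of_eq_of_mem (hwy j hj') (hy j hj hj')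
  · cases j with
    | zero => exact absurd h0 hj
    | succ j => exact hwy j hj

lemma sum_indicator_radius_le (h : IsGoodChainOn Ω C J c r) (hC : 1 ≤ C) {i : ℕ} (hi : i ∈ J)
    (n : ℕ) : ∑ k ∈ Finset.range n, J.indicator r (i + k) ≤ 2 * C ^ 2 * r i := by
  classical
  calc ∑ k ∈ Finset.range n, J.indicator r (i + k)
      = ∑ j ∈ Finset.Ico i (i + n), J.indicator r j := by
        rw [Finset.sum_Ico_eq_sum_range, Nat.add_sub_cancel_left]
    _ = ∑ j ∈ Finset.Ico i (i + n) with j ∈ J, r j :=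
        Finset.sum_indicator_eq_sum_filter _ (fun _ => r) (fun _ => J) id
    _ ≤ 2 * C ^ 2 * r i := h.sum_radius_le hC hi fun j hj => by
        rw [Finset.mem_filter, Finset.mem_Ico] at hj
        exact ⟨hj.2, hj.1.1⟩

lemma tsum_edist_le (h : IsGoodChainOn Ω C J c r) (hC : 1 ≤ C) (hJ : IsLowerSet J)
    (hvJ : ∀ j ∈ J, v j ∈ ball (c j) (r j) ∧ v (j + 1) ∈ ball (c j) (r j))
    (hvy : ∀ j ∉ J, v j = y) {i : ℕ} (hi : i ∈ J) :
    ∑' k, edist (v (i + k)) (v (i + k + 1)) ≤ ENNReal.ofReal (4 * C ^ 2 * r i) := by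
  have hedge (j : ℕ) : dist (v j) (v (j + 1)) ≤ 2 * J.indicator r j := by
    by_cases hj : j ∈ J
    · rw [indicator_of_mem hj, two_mul]
      exact (dist_triangle_right _ _ (c j)).trans (add_le_add (hvJ j hj).1.le (hvJ j hj).2.le)
    · rw [hvy j hj, hvy (j + 1) fun hj' => hj (hJ j.le_succ hj'), dist_self,
        indicator_of_notMem hj, mul_zero]
  refine ENNReal.tsum_le_of_sum_range_le fun n => ?_
  simp only [edist_dist]
  rw [← ENNReal.ofReal_sum_of_nonneg fun _ _ => dist_nonneg]
  refine ENNReal.ofReal_le_ofReal ?_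
  calc ∑ k ∈ Finset.range n, dist (v (i + k)) (v (i + k + 1))
      ≤ ∑ k ∈ Finset.range n, 2 * J.indicator r (i + k) :=
        Finset.sum_le_sum fun k _ => hedge (i + k)
    _ = 2 * ∑ k ∈ Finset.range n, J.indicator r (i + k) := (Finset.mul_sum _ _ _).symm
    _ ≤ 2 * (2 * C ^ 2 * r i) := by gcongr; exact h.sum_indicator_radius_le hC hi n
    _ = 4 * C ^ 2 * r i := by ring

lemma tendsto_vertices (h : IsGoodChainOn Ω C univ c r) (hC : 1 ≤ C)
    (hv : ∀ j, v j ∈ ball (c j) (r j))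
    (hy : Tendsto (fun j => infDist y (ball (c j) (r j))) atTop (𝓝 0)) :
    Tendsto v atTop (𝓝 y) := by
  have hpos (j : ℕ) : 0 < r j := h.radius_pos j trivial
  have hsum : Summable r := summable_of_sum_le (fun j => (hpos j).le) fun s =>
    h.sum_radius_le hC (mem_univ 0) fun j _ => ⟨trivial, j.zero_le⟩
  have hbound (j : ℕ) : dist (v j) y ≤ infDist y (ball (c j) (r j)) + 2 * r j := by
    rw [dist_comm]
    exact (dist_le_infDist_add_diam isBounded_ball (hv j)).trans
      (add_le_add_right (diam_ball (hpos j).le) _)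
  rw [tendsto_iff_dist_tendsto_zero]
  refine squeeze_zero (fun _ => dist_nonneg) hbound ?_
  simpa using hy.add (hsum.tendsto_atTop_zero.const_mul 2)

lemma carrotCurve (h : IsGoodChainOn Ω C J c r) (hC : 1 ≤ C) (hF : (frontier Ω).Nonempty)
    (hJ : IsLowerSet J) (hvJ : ∀ j ∈ J, v j ∈ ball (c j) (r j) ∧ v (j + 1) ∈ ball (c j) (r j))
    (hvy : ∀ j ∉ J, v j = y) (hv : Tendsto v atTop (𝓝 y)) :
    CarrotCurve Ω (1 / (4 * C ^ 3)) (v 0) y := by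
  have hout {i : ℕ} (hi : i ∉ J) {j : ℕ} (hij : i ≤ j) : v j = y := hvy j fun hj => hi (hJ hij hj)
  have hball {i : ℕ} (hi : i ∈ J) : segment ℝ (v i) (v (i + 1)) ⊆ ball (c i) (r i) :=
    (convex_ball _ _).segment_subset (hvJ i hi).1 (hvJ i hi).2
  refine carrotCurve_of_polygonalPath (by positivity) hv (fun i => ?_) fun i z hz => ?_
  · by_cases hi : i ∈ J
    · exact (hball hi).trans ((h.ball_subset i hi).trans subset_union_left)
    · rw [hout hi le_rfl, hout hi i.le_succ, segment_same]
      exact subset_union_right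
  · by_cases hi : i ∈ J
    · have hradius : r i ≤ C * δ[Ω](z) :=
        (h.le_setD i hi).trans (by gcongr; exact setD_le_infDist (hball hi hz) hF)
      calc ENNReal.ofReal (1 / (4 * C ^ 3)) * ∑' k, edist (v (i + k)) (v (i + k + 1))
          ≤ ENNReal.ofReal (1 / (4 * C ^ 3)) * ENNReal.ofReal (4 * C ^ 2 * r i) := by
            gcongr
            exact h.tsum_edist_le hC hJ hvJ hvy hi
        _ = ENNReal.ofReal (r i / C) := by
            rw [← ENNReal.ofReal_mul (by positivity)]
            congr 1
            field_simp
        _ ≤ ENNReal.ofReal (δ[Ω](z)) :=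
            ENNReal.ofReal_le_ofReal ((div_le_iff₀' (by positivity)).2 hradius)
    · have hzero (k : ℕ) : edist (v (i + k)) (v (i + k + 1)) = 0 := by
        rw [hout hi (i.le_add_right k), hout hi (by lia), edist_self]
      simp [hzero]

end IsGoodChainOn

lemma GoodChain.carrotCurve (h : GoodChain Ω C x y) (hC : 1 ≤ C) (hF : (frontier Ω).Nonempty) :
    CarrotCurve Ω (1 / (4 * C ^ 3)) x y := by
  rcases goodChain_iff.1 h with ⟨-, N, c, r, hchain, hx, hy⟩ | ⟨-, c, r, hchain, hx, hy⟩
  · have hlast : ∀ j ∈ Iic N, j + 1 ∉ Iic N → y ∈ ball (c j) (r j) := by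
      intro j hj hj'
      rwa [show j = N by simp only [mem_Iic] at hj hj'; lia]
    obtain ⟨v, rfl, hvJ, hvy⟩ := hchain.exists_vertices N.zero_le hx hlast
    refine hchain.carrotCurve hC hF (isLowerSet_Iic N) hvJ hvy (tendsto_const_nhds.congr' ?_)
    filter_upwards [eventually_gt_atTop N] with j hj
    exact (hvy j (notMem_Iic.2 hj)).symm
  · obtain ⟨v, rfl, hvJ, hvy⟩ :=
      hchain.exists_vertices trivial hx (y := y) fun _ _ hj => absurd trivial hj
    exact hchain.carrotCurve hC hF isLowerSet_univ hvJ hvy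
      (hchain.tendsto_vertices hC (fun j => (hvJ j trivial).1) hy)

end ChainToCarrot

theorem carrotCurve_iff_goodChain_general :
    (∀ (d : ℕ) (lam : ℝ), 0 < lam → ∃ C : ℝ, 1 ≤ C ∧ ∀ Ω : Set (Euc d), IsOpen Ω → Ω ≠ univ →
      ∀ x ∈ Ω, ∀ y ∈ closure Ω, CarrotCurve Ω lam x y → GoodChain Ω C x y) ∧
    (∀ C : ℝ, 1 ≤ C → ∃ lam ∈ Ioo (0 : ℝ) 1, ∀ (d : ℕ) (Ω : Set (Euc d)), Ω ≠ univ →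
      ∀ x ∈ Ω, ∀ y, GoodChain Ω C x y → CarrotCurve Ω lam x y) := by
  refine ⟨fun d lam hlam => ?_, fun C hC => ⟨1 / (4 * C ^ 3), ⟨by positivity, ?_⟩, ?_⟩⟩
  · obtain ⟨C, hC, hchain⟩ := CarrotCurve.exists_goodChain d hlam
    exact ⟨C, hC, fun Ω hΩ hne x hx y hy =>
      hchain hΩ (nonempty_frontier_iff.2 ⟨⟨x, hx⟩, hne⟩) hx hy⟩
  · rw [div_lt_one (by positivity)]
    linarith [one_le_pow₀ hC (n := 3)]
  · exact fun d Ω hne x hx y h => h.carrotCurve hC (nonempty_frontier_iff.2 ⟨⟨x, hx⟩, hne⟩)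

/-- For an open set `Ω ⊊ ℝ^{n+1}`, `x ∈ Ω` and `y ∈ cl Ω` with
`δ_Ω(y) ≤ δ_Ω(x)`: (i) for every `λ ∈ (0,1)` there is `C ≥ 1` (depending only on `λ`
and `n`) such that the existence of a `λ`-carrot curve from `x` to `y` implies the
existence of a `C`-good Harnack chain from `x` to `y`; and (ii) for every `C ≥ 1` there
is `λ ∈ (0,1)` (depending only on `C` and `n`) such that the existence of a `C`-good
Harnack chain from `x` to `y` implies the existence of a `λ`-carrot curve from `x`
to `y`. -/
theorem carrotCurve_iff_goodChain (n : ℕ) :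
    (∀ lam ∈ Set.Ioo (0:ℝ) 1, ∃ C : ℝ, 1 ≤ C ∧
      ∀ (Ω : Set (Euc (n+1))), IsOpen Ω → Ω ≠ Set.univ →
        ∀ x ∈ Ω, ∀ y ∈ closure Ω,
          infDist y (frontier Ω) ≤ infDist x (frontier Ω) →
          CarrotCurve Ω lam x y → GoodChain Ω C x y) ∧
    (∀ C : ℝ, 1 ≤ C → ∃ lam ∈ Set.Ioo (0:ℝ) 1,
      ∀ (Ω : Set (Euc (n+1))), IsOpen Ω → Ω ≠ Set.univ →
        ∀ x ∈ Ω, ∀ y ∈ closure Ω,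
          infDist y (frontier Ω) ≤ infDist x (frontier Ω) →
          GoodChain Ω C x y → CarrotCurve Ω lam x y) := by
  refine ⟨fun lam hlam => ?_, fun C hC => ?_⟩
  · obtain ⟨C, hC, h⟩ := carrotCurve_iff_goodChain_general.1 (n + 1) lam hlam.1
    exact ⟨C, hC, fun Ω hΩ hne x hx y hy _ => h Ω hΩ hne x hx y hy⟩
  · obtain ⟨lam, hlam, h⟩ := carrotCurve_iff_goodChain_general.2 C hC
    exact ⟨lam, hlam, fun Ω _ hne x hx y _ _ => h (n + 1) Ω hne x hx y⟩

end HarmMeas
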